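/- Let d ≥ 1 and let P, Q, S : ℝ^d × ℝ → ℝ^d be smooth time-dependent vector fields. Define the binary operation ▷ by (P ▷ Q)(x,t) = ∫₀ᵗ ( ∂ₓP(x,τ) · Q(x,t) − ∂ₓQ(x,t) · P(x,τ) ) dτ, where ∂ₓ denotes the spatial Fréchet differential. Then the pre-Lie relation holds: P ▷ (Q ▷ S) − (P ▷ Q) ▷ S = Q ▷ (P ▷ S) − (Q ▷ P) ▷ S (as equality of maps ℝ^d × ℝ → ℝ^d). -/

import Mathlib

/-- The binary operation of equation (3.8) of the paper on smooth
time-dependent vector fields on `ℝ^d`: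
`(P ▷ Q)(x,t) = ∫₀ᵗ (∂ₓP(x,τ)·Q(x,t) − ∂ₓQ(x,t)·P(x,τ)) dτ`. -/
noncomputable def rhdVF {d : ℕ}
    (P Q : EuclideanSpace ℝ (Fin d) × ℝ → EuclideanSpace ℝ (Fin d)) :
    EuclideanSpace ℝ (Fin d) × ℝ → EuclideanSpace ℝ (Fin d) :=
  fun p => ∫ τ in (0:ℝ)..p.2,
    (fderiv ℝ (fun y => P (y, τ)) p.1 (Q p)
      - fderiv ℝ (fun y => Q (y, p.2)) p.1 (P (p.1, τ)))

/-! Write `I F (x, t) = ∫₀ᵗ F(x, τ) dτ` and `[W, V] = ∂ₓW · V - ∂ₓV · W`. Then `P ▷ Q = [I P, Q]`,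
so `P ▷ (Q ▷ S) - Q ▷ (P ▷ S) = [I P, [I Q, S]] - [I Q, [I P, S]] = [[I P, I Q], S]` by the
Jacobi identity. On the other hand, the time derivative of `[I P, I Q]` is
`[P, I Q] + [I P, Q] = P ▷ Q - Q ▷ P`, and `[I P, I Q]` vanishes at time `0`; hence
`[I P, I Q] = I (P ▷ Q - Q ▷ P)`, and the right-hand side above is `(P ▷ Q - Q ▷ P) ▷ S`.
-/

open Set Topology VectorField

section TimeIntegral

variable {X G : Type*} [NormedAddCommGroup G] [NormedSpace ℝ G]

/-- The primitive `(x, t) ↦ ∫₀ᵗ F(x, τ) dτ` of a time-dependent map. -/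
noncomputable def timeIntegral (F : X × ℝ → G) : X × ℝ → G :=
  fun p => ∫ τ in (0 : ℝ)..p.2, F (p.1, τ)

theorem timeIntegral_eq_integral_smul (F : X × ℝ → G) :
    timeIntegral F = fun p => ∫ s in (0 : ℝ)..1, p.2 • F (p.1, p.2 * s) := by
  funext p
  rw [intervalIntegral.integral_smul,
    intervalIntegral.smul_integral_comp_mul_left (f := fun s => F (p.1, s)), mul_zero, mul_one,
    timeIntegral]

variable [TopologicalSpace X] {F : X × ℝ → G}

theorem timeIntegral_sub {F₁ F₂ : X × ℝ → G} (hF₁ : Continuous F₁) (hF₂ : Continuous F₂) :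
    timeIntegral (F₁ - F₂) = timeIntegral F₁ - timeIntegral F₂ :=
  funext fun _ => intervalIntegral.integral_sub
    (Continuous.intervalIntegrable (by fun_prop) _ _)
    (Continuous.intervalIntegrable (by fun_prop) _ _)

variable [CompleteSpace G]

theorem hasDerivAt_timeIntegral (hF : Continuous F) (x : X) (t : ℝ) :
    HasDerivAt (fun s => timeIntegral F (x, s)) (F (x, t)) t :=
  (Continuous.integral_hasStrictDerivAt (f := fun s => F (x, s)) (by fun_prop) 0 t).hasDerivAt

theorem timeIntegral_eq_sub_of_hasDerivAt {A : X × ℝ → G} (hF : Continuous F) {x : X}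
    (hA : ∀ t, HasDerivAt (fun s => A (x, s)) (F (x, t)) t) (t : ℝ) :
    timeIntegral F (x, t) = A (x, t) - A (x, 0) :=
  intervalIntegral.integral_eq_sub_of_hasDerivAt (fun s _ => hA s)
    (Continuous.intervalIntegrable (by fun_prop) 0 t)

end TimeIntegral

section SpatialFDeriv

variable {E G : Type*} [NormedAddCommGroup E] [NormedSpace ℝ E]
  [NormedAddCommGroup G] [NormedSpace ℝ G] {F : E × ℝ → G}

/-- The partial Fréchet differential `∂ₓF` of a time-dependent map. -/
noncomputable def spatialFDeriv (F : E × ℝ → G) : E × ℝ → E →L[ℝ] G :=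
  fun p => fderiv ℝ (fun y => F (y, p.2)) p.1

theorem contDiff_spatialFDeriv {m n : WithTop ℕ∞} (hF : ContDiff ℝ n F) (hmn : m + 1 ≤ n) :
    ContDiff ℝ m (spatialFDeriv F) :=
  ContDiff.fderiv (f := fun (p : E × ℝ) y => F (y, p.2)) (m := n) (by fun_prop) contDiff_fst hmn

theorem continuous_spatialFDeriv (hF : ContDiff ℝ 1 F) : Continuous (spatialFDeriv F) :=
  (contDiff_spatialFDeriv (m := 0) hF (by simp)).continuous

theorem hasFDerivAt_intervalIntegral_of_contDiff (hF : ContDiff ℝ 1 F) (a b : ℝ) (x : E) :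
    HasFDerivAt (fun y => ∫ t in a..b, F (y, t)) (∫ t in a..b, spatialFDeriv F (x, t)) x := by
  have hF' : Continuous (spatialFDeriv F) := continuous_spatialFDeriv hF
  have hFc : Continuous F := hF.continuous
  obtain ⟨C, hC⟩ := (isCompact_uIcc (a := a) (b := b)).exists_bound_of_continuousOn
    (f := fun t => spatialFDeriv F (x, t)) (by fun_prop)
  have hbound : ∀ᶠ y in 𝓝 x, ∀ t ∈ uIcc a b, ‖spatialFDeriv F (y, t)‖ ≤ C + 1 :=
    isCompact_uIcc.eventually_forall_of_forall_eventually fun t ht =>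
      (hF'.norm.continuousAt.eventually_lt_const
        ((hC t ht).trans_lt (lt_add_one C))).mono fun _ => le_of_lt
  refine intervalIntegral.hasFDerivAt_integral_of_dominated_of_fderiv_le
    (F' := fun y t => spatialFDeriv F (y, t)) (bound := fun _ => C + 1) hbound
    (.of_forall fun y => Continuous.aestronglyMeasurable (by fun_prop))
    (Continuous.intervalIntegrable (by fun_prop) a b)
    (Continuous.aestronglyMeasurable (by fun_prop))
    (.of_forall fun t ht y hy => hy t (uIoc_subset_uIcc ht)) intervalIntegrable_const
    (.of_forall fun t _ y _ => ?_)
  have hslice : ContDiff ℝ 1 fun z => F (z, t) := by fun_prop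
  exact (hslice.differentiable one_ne_zero y).hasFDerivAt

theorem spatialFDeriv_timeIntegral (hF : ContDiff ℝ 1 F) :
    spatialFDeriv (timeIntegral F) = timeIntegral (spatialFDeriv F) :=
  funext fun p => (hasFDerivAt_intervalIntegral_of_contDiff hF 0 p.2 p.1).fderiv

end SpatialFDeriv

section ContDiffIntegral

universe u

-- A common universe lets the induction on `n` pass from `G` to `E →L[ℝ] G`.
variable {E G : Type u} [NormedAddCommGroup E] [NormedSpace ℝ E]
  [NormedAddCommGroup G] [NormedSpace ℝ G] {F : E × ℝ → G} {n : ℕ∞}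

theorem contDiff_intervalIntegral_of_contDiff (hF : ContDiff ℝ n F) (a b : ℝ) :
    ContDiff ℝ n fun x => ∫ t in a..b, F (x, t) := by
  induction n using ENat.nat_induction generalizing G with
  | zero =>
    exact contDiff_zero.2 <| intervalIntegral.continuous_parametric_intervalIntegral_of_continuous'
      (f := fun x t => F (x, t)) hF.continuous a b
  | succ n ih =>
    push_cast at hF ⊢
    exact contDiff_succ_iff_hasFDerivAt.2 ⟨_, ih (contDiff_spatialFDeriv hF le_rfl),
      hasFDerivAt_intervalIntegral_of_contDiff (hF.of_le (by simp)) a b⟩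
  | top ih => exact contDiff_infty.2 fun n => ih n (contDiff_infty.1 hF n)

theorem contDiff_timeIntegral (hF : ContDiff ℝ n F) : ContDiff ℝ n (timeIntegral F) := by
  -- Rescaling time fixes the limits of integration, so only the integrand depends on `(x, t)`.
  rw [timeIntegral_eq_integral_smul]
  exact contDiff_intervalIntegral_of_contDiff
    (F := fun q : (E × ℝ) × ℝ => q.1.2 • F (q.1.1, q.1.2 * q.2)) (by fun_prop) 0 1

end ContDiffIntegral

section TimeDependentVectorField

variable {E : Type*} [NormedAddCommGroup E] [NormedSpace ℝ E]

/-- The bracket `[W, V] = ∂ₓW · V - ∂ₓV · W` of time-dependent vector fields, taken at each fixed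
time. Its sign is opposite to that of `VectorField.lieBracket`. -/
noncomputable def spatialBracket (W V : E × ℝ → E) : E × ℝ → E :=
  fun p => spatialFDeriv W p (V p) - spatialFDeriv V p (W p)

/-- The operation `P ▷ Q` of `rhdVF`, for time-dependent vector fields on a normed space. -/
noncomputable def rhd (P Q : E × ℝ → E) : E × ℝ → E :=
  fun p => ∫ τ in (0 : ℝ)..p.2,
    (spatialFDeriv P (p.1, τ) (Q p) - spatialFDeriv Q p (P (p.1, τ)))

theorem spatialBracket_apply_eq_lieBracket (W V : E × ℝ → E) (x : E) (t : ℝ) :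
    spatialBracket W V (x, t) = lieBracket ℝ (fun y => V (y, t)) (fun y => W (y, t)) x :=
  rfl

theorem spatialBracket_swap (W V : E × ℝ → E) : spatialBracket W V = -spatialBracket V W :=
  funext fun _ => (neg_sub _ _).symm

theorem spatialBracket_sub_left {U W V : E × ℝ → E}
    (hU : ∀ t, Differentiable ℝ fun y => U (y, t)) (hW : ∀ t, Differentiable ℝ fun y => W (y, t)) :
    spatialBracket (U - W) V = spatialBracket U V - spatialBracket W V := by
  funext p
  have hsub : spatialFDeriv (U - W) p = spatialFDeriv U p - spatialFDeriv W p :=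
    fderiv_sub (hU p.2 p.1) (hW p.2 p.1)
  simp only [spatialBracket, hsub, Pi.sub_apply, sub_apply, map_sub]
  abel

theorem spatialBracket_jacobi {U V W : E × ℝ → E} (hU : ∀ t, ContDiff ℝ 2 fun y => U (y, t))
    (hV : ∀ t, ContDiff ℝ 2 fun y => V (y, t)) (hW : ∀ t, ContDiff ℝ 2 fun y => W (y, t)) :
    spatialBracket (spatialBracket U V) W =
      spatialBracket U (spatialBracket V W) - spatialBracket V (spatialBracket U W) := by
  rw [spatialBracket_swap V (spatialBracket U W), sub_neg_eq_add]
  funext ⟨x, t⟩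
  simp only [Pi.add_apply, spatialBracket_apply_eq_lieBracket]
  exact leibniz_identity_lieBracket (n := 2) (by simp)
    (hW t).contDiffAt (hV t).contDiffAt (hU t).contDiffAt

theorem contDiff_spatialBracket {m n : WithTop ℕ∞} {W V : E × ℝ → E} (hW : ContDiff ℝ n W)
    (hV : ContDiff ℝ n V) (hmn : m + 1 ≤ n) : ContDiff ℝ m (spatialBracket W V) := by
  have hmn' : m ≤ n := le_self_add.trans hmn
  exact ((contDiff_spatialFDeriv hW hmn).clm_apply (hV.of_le hmn')).sub
    ((contDiff_spatialFDeriv hV hmn).clm_apply (hW.of_le hmn'))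

variable [CompleteSpace E] {P Q S : E × ℝ → E}

theorem rhd_eq_spatialBracket_timeIntegral (hP : ContDiff ℝ 1 P) (Q : E × ℝ → E) :
    rhd P Q = spatialBracket (timeIntegral P) Q := by
  funext ⟨x, t⟩
  have hPc : Continuous P := hP.continuous
  have hP' : Continuous (spatialFDeriv P) := continuous_spatialFDeriv hP
  have hPx : IntervalIntegrable (fun τ => P (x, τ)) MeasureTheory.volume 0 t :=
    Continuous.intervalIntegrable (by fun_prop) 0 t
  have hP'x : IntervalIntegrable (fun τ => spatialFDeriv P (x, τ)) MeasureTheory.volume 0 t :=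
    Continuous.intervalIntegrable (by fun_prop) 0 t
  rw [spatialBracket, spatialFDeriv_timeIntegral hP, timeIntegral, timeIntegral,
    ContinuousLinearMap.intervalIntegral_apply hP'x,
    ← ContinuousLinearMap.intervalIntegral_comp_comm _ hPx]
  exact intervalIntegral.integral_sub (Continuous.intervalIntegrable (by fun_prop) 0 t)
    (Continuous.intervalIntegrable (by fun_prop) 0 t)

theorem contDiff_rhd {m n : ℕ∞} (hP : ContDiff ℝ n P) (hQ : ContDiff ℝ n Q)
    (hmn : m + 1 ≤ n) : ContDiff ℝ m (rhd P Q) := by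
  rw [rhd_eq_spatialBracket_timeIntegral (hP.of_le (mod_cast le_add_self.trans hmn))]
  exact contDiff_spatialBracket (contDiff_timeIntegral hP) hQ (mod_cast hmn)

theorem rhd_sub_left {P₁ P₂ : E × ℝ → E} (hP₁ : ContDiff ℝ 1 P₁) (hP₂ : ContDiff ℝ 1 P₂)
    (S : E × ℝ → E) : rhd (P₁ - P₂) S = rhd P₁ S - rhd P₂ S := by
  have hslice {P : E × ℝ → E} (hP : ContDiff ℝ 1 P) (t : ℝ) :
      Differentiable ℝ fun y => timeIntegral P (y, t) :=
    fun x => (hasFDerivAt_intervalIntegral_of_contDiff hP 0 t x).differentiableAt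
  have hsub : ContDiff ℝ 1 (P₁ - P₂) := hP₁.sub hP₂
  rw [rhd_eq_spatialBracket_timeIntegral hsub, rhd_eq_spatialBracket_timeIntegral hP₁,
    rhd_eq_spatialBracket_timeIntegral hP₂, timeIntegral_sub hP₁.continuous hP₂.continuous,
    spatialBracket_sub_left (hslice hP₁) (hslice hP₂)]

theorem hasDerivAt_spatialBracket_timeIntegral (hP : ContDiff ℝ 1 P) (hQ : ContDiff ℝ 1 Q)
    (x : E) (t : ℝ) :
    HasDerivAt (fun s => spatialBracket (timeIntegral P) (timeIntegral Q) (x, s))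
      ((rhd P Q - rhd Q P) (x, t)) t := by
  have hI {P : E × ℝ → E} (hP : ContDiff ℝ 1 P) := hasDerivAt_timeIntegral hP.continuous x t
  have hDI {P : E × ℝ → E} (hP : ContDiff ℝ 1 P) :
      HasDerivAt (fun s => spatialFDeriv (timeIntegral P) (x, s)) (spatialFDeriv P (x, t)) t := by
    rw [spatialFDeriv_timeIntegral hP]
    exact hasDerivAt_timeIntegral (continuous_spatialFDeriv hP) x t
  refine (((hDI hP).clm_apply (hI hQ)).sub ((hDI hQ).clm_apply (hI hP))).congr_deriv ?_
  rw [rhd_eq_spatialBracket_timeIntegral hP, rhd_eq_spatialBracket_timeIntegral hQ]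
  simp only [Pi.sub_apply, spatialBracket]
  abel

theorem timeIntegral_rhd_sub_rhd (hP : ContDiff ℝ 1 P) (hQ : ContDiff ℝ 1 Q) :
    timeIntegral (rhd P Q - rhd Q P) = spatialBracket (timeIntegral P) (timeIntegral Q) := by
  have hcont {P Q : E × ℝ → E} (hP : ContDiff ℝ 1 P) (hQ : ContDiff ℝ 1 Q) :
      Continuous (rhd P Q) :=
    (contDiff_rhd (m := 0) (n := 1) hP hQ (by simp)).continuous
  have hzero : ∀ x, spatialBracket (timeIntegral P) (timeIntegral Q) (x, 0) = 0 := fun x => by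
    simp [spatialBracket, timeIntegral]
  funext ⟨x, t⟩
  rw [timeIntegral_eq_sub_of_hasDerivAt ((hcont hP hQ).sub (hcont hQ hP))
    (hasDerivAt_spatialBracket_timeIntegral hP hQ x), hzero, sub_zero]

theorem rhdVF_preLie_general (hP : ContDiff ℝ 2 P) (hQ : ContDiff ℝ 2 Q)
    (hS : ∀ t, ContDiff ℝ 2 fun y => S (y, t)) :
    rhd P (rhd Q S) - rhd (rhd P Q) S = rhd Q (rhd P S) - rhd (rhd Q P) S := by
  have hP₁ : ContDiff ℝ 1 P := hP.of_le one_le_two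
  have hQ₁ : ContDiff ℝ 1 Q := hQ.of_le one_le_two
  have hPQ : ContDiff ℝ 1 (rhd P Q) := contDiff_rhd (m := 1) (n := 2) hP hQ (by norm_num)
  have hQP : ContDiff ℝ 1 (rhd Q P) := contDiff_rhd (m := 1) (n := 2) hQ hP (by norm_num)
  have hcomm : ContDiff ℝ 1 (rhd P Q - rhd Q P) := hPQ.sub hQP
  have hIP (t : ℝ) : ContDiff ℝ 2 fun y => timeIntegral P (y, t) :=
    contDiff_intervalIntegral_of_contDiff (n := 2) hP 0 t
  have hIQ (t : ℝ) : ContDiff ℝ 2 fun y => timeIntegral Q (y, t) :=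
    contDiff_intervalIntegral_of_contDiff (n := 2) hQ 0 t
  rw [sub_eq_sub_iff_sub_eq_sub]
  calc rhd P (rhd Q S) - rhd Q (rhd P S)
      = spatialBracket (timeIntegral P) (spatialBracket (timeIntegral Q) S)
          - spatialBracket (timeIntegral Q) (spatialBracket (timeIntegral P) S) := by
        simp only [rhd_eq_spatialBracket_timeIntegral hP₁, rhd_eq_spatialBracket_timeIntegral hQ₁]
    _ = spatialBracket (spatialBracket (timeIntegral P) (timeIntegral Q)) S :=
        (spatialBracket_jacobi hIP hIQ hS).symm
    _ = rhd (rhd P Q - rhd Q P) S := by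
        rw [rhd_eq_spatialBracket_timeIntegral hcomm, timeIntegral_rhd_sub_rhd hP₁ hQ₁]
    _ = rhd (rhd P Q) S - rhd (rhd Q P) S := rhd_sub_left hPQ hQP S

end TimeDependentVectorField

theorem rhdVF_eq_rhd {d : ℕ} (P Q : EuclideanSpace ℝ (Fin d) × ℝ → EuclideanSpace ℝ (Fin d)) :
    rhdVF P Q = rhd P Q :=
  rfl

/-- The pre-Lie relation
`P ▷ (Q ▷ S) − (P ▷ Q) ▷ S = Q ▷ (P ▷ S) − (Q ▷ P) ▷ S`
for the operation `▷` on smooth time-dependent vector fields on `ℝ^d`. -/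
theorem rhdVF_preLie (d : ℕ) (hd : 1 ≤ d)
    (P Q S : EuclideanSpace ℝ (Fin d) × ℝ → EuclideanSpace ℝ (Fin d))
    (hP : ContDiff ℝ (⊤ : ℕ∞) P) (hQ : ContDiff ℝ (⊤ : ℕ∞) Q) (hS : ContDiff ℝ (⊤ : ℕ∞) S) :
    rhdVF P (rhdVF Q S) - rhdVF (rhdVF P Q) S
      = rhdVF Q (rhdVF P S) - rhdVF (rhdVF Q P) S := by
  have hle : (2 : WithTop ℕ∞) ≤ (⊤ : ℕ∞) := WithTop.coe_le_coe.2 le_top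
  simp only [rhdVF_eq_rhd]
  exact rhdVF_preLie_general (hP.of_le hle) (hQ.of_le hle)
    fun t => (hS.of_le hle).comp (contDiff_prodMk_left t)
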